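/- (Bagby–Bos–Levenberg polynomial approximation theorem.) Let X ⊂ ℝⁿ be compact and let h : ℝⁿ → ℝ be such that both h and its gradient ∇h are continuously differentiable (i.e., h is of class C² on a neighborhood of X). Then there exists a constant c₁ ≥ 0, depending only on h and X, such that for every integer d ≥ 1 there exists a real polynomial p_d in n variables with deg(p_d) ≤ d and ‖h − p_d‖_{C¹(X)} ≤ c₁/d. -/

import Mathlib

open MeasureTheory
lemma abs_sin_nat_mul (n : ℕ) (x : ℝ) : |Real.sin (n * x)| ≤ n * |Real.sin x| := by
  induction n with
  | zero => simp
  | succ k ih =>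
    have : ((k + 1 : ℕ) : ℝ) * x = k * x + x := by push_cast; ring
    rw [this, Real.sin_add]
    have h1 := abs_add_le (Real.sin (k * x) * Real.cos x) (Real.cos (k * x) * Real.sin x)
    rw [abs_mul, abs_mul] at h1
    have h2 := mul_le_mul_of_nonneg_left (Real.abs_cos_le_one x) (abs_nonneg (Real.sin (k * x)))
    have h3 := mul_le_mul_of_nonneg_right (Real.abs_cos_le_one (k * x)) (abs_nonneg (Real.sin x))
    push_cast
    linarith

lemma exists_S_pair (r : ℕ) : ∃ S S' : Polynomial ℝ,
    S.natDegree ≤ 2 * r ∧ S'.natDegree ≤ 2 * (r + 1) ∧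
    S.eval 0 = 2 * r + 1 ∧ S'.eval 0 = 2 * r + 3 ∧
    (∀ φ : ℝ, Real.sin φ * S.eval (Real.sin φ) = Real.sin ((2 * r + 1) * φ)) ∧
    (∀ φ : ℝ, Real.sin φ * S'.eval (Real.sin φ) = Real.sin ((2 * r + 3) * φ)) := by
  induction r with
  | zero =>
    refine ⟨1, Polynomial.C 3 - Polynomial.C 4 * Polynomial.X ^ 2, by simp, by compute_degree,
      by simp, by simp, by simp, ?_⟩
    intro φ
    have := Real.sin_three_mul φ
    simp
    rw [this]; ring
  | succ r ih =>
    obtain ⟨S, S', d, d', e, e', s, s'⟩ := ih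
    refine ⟨S', (Polynomial.C 2 - Polynomial.C 4 * Polynomial.X ^ 2) * S' - S, d', ?_, ?_, ?_, ?_, ?_⟩
    · refine (Polynomial.natDegree_sub_le _ _).trans (max_le ?_ (by omega))
      refine Polynomial.natDegree_mul_le.trans ?_
      have : (Polynomial.C (2:ℝ) - Polynomial.C 4 * Polynomial.X ^ 2).natDegree ≤ 2 := by
        compute_degree
      omega
    · rw [e']; push_cast; ring
    · simp [e, e']; ring
    · intro φ; rw [s' φ]; congr 1; push_cast; ring
    · intro φ
      have h1 : Real.sin ((2 * (r + 1 : ℕ) + 3) * φ) = 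
        2 * Real.sin ((2 * r + 3) * φ) * Real.cos (2 * φ) - Real.sin ((2 * r + 1) * φ) := by
        have a : (2 * ((r + 1 : ℕ) : ℝ) + 3) * φ = (2 * r + 3) * φ + 2 * φ := by push_cast; ring
        have b : (2 * (r : ℝ) + 1) * φ = (2 * r + 3) * φ - 2 * φ := by ring
        rw [a, b, Real.sin_add, Real.sin_sub]; ring
      rw [h1, ← s, ← s', Real.cos_two_mul, Real.cos_sq']
      simp; ring

lemma exists_S (r : ℕ) : ∃ S : Polynomial ℝ, S.natDegree ≤ 2 * r ∧
    (∀ t ∈ Set.Icc (-1 : ℝ) 1, |t * S.eval t| ≤ 1) ∧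
    (∀ t ∈ Set.Icc (-1 : ℝ) 1, |S.eval t| ≤ 2 * r + 1) ∧
    (∀ t ∈ Set.Icc (0 : ℝ) (1 / (2 * r + 1)), ((2 * r + 1 : ℝ)) / 2 ≤ S.eval t) := by
  obtain ⟨S, -, d, -, e, -, s, -⟩ := exists_S_pair r
  have hN : (1 : ℝ) ≤ 2 * r + 1 := by have : (0:ℝ) ≤ r := by positivity
                                      linarith
  refine ⟨S, d, ?_, ?_, ?_⟩
  · intro t ht
    have := s (Real.arcsin t)
    rw [Real.sin_arcsin ht.1 ht.2] at this
    rw [this]; exact Real.abs_sin_le_one _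
  · intro t ht
    rcases eq_or_ne t 0 with rfl | h0
    · rw [e, abs_of_nonneg (by linarith)]
    have := s (Real.arcsin t)
    have h2 := abs_sin_nat_mul (2 * r + 1) (Real.arcsin t)
    push_cast at h2
    rw [← this, Real.sin_arcsin ht.1 ht.2, abs_mul, mul_comm] at h2
    exact le_of_mul_le_mul_right h2 (abs_pos.2 h0)
  · intro t ht
    rcases eq_or_lt_of_le ht.1 with rfl | h0
    · rw [e]; linarith
    have h1 : t ≤ 1 := ht.2.trans (by rw [div_le_one (by linarith)]; exact hN)
    have := s (Real.arcsin t)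
    set φ := Real.arcsin t with hφ
    have hs : Real.sin φ = t := Real.sin_arcsin (by linarith) h1
    have hφ0 : 0 ≤ φ := Real.arcsin_nonneg.2 ht.1
    have hpi := Real.pi_pos
    have hle : φ ≤ Real.pi / 2 / (2 * r + 1) := by
      rw [hφ, Real.arcsin_le_iff_le_sin ⟨by linarith, h1⟩ ⟨by have : 0 ≤ Real.pi / 2 / (2 * r + 1) := by positivity
                                                              linarith, div_le_self (by positivity) hN⟩]
      have := Real.mul_le_sin (x := Real.pi / 2 / (2 * r + 1)) (by positivity) (div_le_self (by positivity) hN)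
      refine ht.2.trans (le_trans (le_of_eq ?_) this)
      field_simp
    have h3 : (2 * r + 1) * φ ≤ Real.pi / 2 := by
      rw [le_div_iff₀ (by linarith)] at hle; linarith
    have h4 := Real.mul_le_sin (x := (2 * r + 1) * φ) (by positivity) h3
    rw [← this, hs] at h4
    have h5 : t ≤ φ := hs ▸ Real.sin_le hφ0
    have h6 : 1 / 2 ≤ 2 / Real.pi := by
      rw [div_le_div_iff₀ (by norm_num) hpi]; linarith [Real.pi_le_four]
    have h7 : 1 / 2 * ((2 * r + 1) * t) ≤ 2 / Real.pi * ((2 * r + 1) * φ) := by gcongr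
    have h8 : t * ((2 * r + 1) / 2) ≤ t * S.eval t := by linarith
    exact le_of_mul_le_mul_left h8 h0

lemma kernel_one (m : ℕ) : ∃ q : Polynomial ℝ, q.natDegree ≤ m ∧ (∀ t, 0 ≤ q.eval t) ∧
    0 < ∫ t in (-1 : ℝ)..1, q.eval t ∧
    ∫ t in (-1 : ℝ)..1, |t| * q.eval t ≤ (256 * Real.pi) / (m + 1) * ∫ t in (-1 : ℝ)..1, q.eval t := by
  obtain ⟨S, d, h1, h2, h3⟩ := exists_S (m / 8)
  set N : ℝ := 2 * (m / 8 : ℕ) + 1 with hN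
  have hN1 : (1 : ℝ) ≤ N := by 
    have : (0:ℝ) ≤ (m / 8 : ℕ) := by positivity
    linarith
  have hN8 : (m + 1 : ℝ) ≤ 8 * N := by
    have : m + 1 ≤ 8 * (2 * (m / 8) + 1) := by omega
    rw [hN]; exact_mod_cast this
  have hN0 : 0 < N := by linarith
  have hcont : Continuous fun t => (S ^ 4).eval t := Polynomial.continuous _
  have hlow : N ^ 3 / 16 ≤ ∫ t in (-1 : ℝ)..1, (S ^ 4).eval t := by
    have hpos : ∀ t, 0 ≤ (S ^ 4).eval t := fun t => by rw [Polynomial.eval_pow]; positivity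
    calc N ^ 3 / 16 = ∫ t in (0:ℝ)..(1/N), (N / 2) ^ 4 := by
          rw [intervalIntegral.integral_const]; simp; field_simp; norm_num
      _ ≤ ∫ t in (0:ℝ)..(1/N), (S ^ 4).eval t := by
          refine intervalIntegral.integral_mono_on (by positivity) (by simp) (hcont.intervalIntegrable _ _) ?_
          intro t ht
          rw [Polynomial.eval_pow]
          exact pow_le_pow_left₀ (by positivity) (h3 t ht) 4
      _ ≤ _ := by
          refine intervalIntegral.integral_mono_interval (by norm_num) (by positivity) ?_ ?_ (hcont.intervalIntegrable _ _)
          · rw [div_le_one hN0]; exact hN1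
          · exact Filter.Eventually.of_forall hpos
  have hup : ∫ t in (-1 : ℝ)..1, |t| * (S ^ 4).eval t ≤ 2 * Real.pi * N ^ 2 := by
    have hd : ∀ t : ℝ, HasDerivAt (fun t => 2 * N ^ 2 * Real.arctan (N * t)) (2 * N ^ 3 / (1 + (N * t) ^ 2)) t := by
      intro t
      have := (((hasDerivAt_id t).const_mul N).arctan).const_mul (2 * N ^ 2)
      refine this.congr_deriv ?_
      simp only [id, mul_one]; ring
    have hc : Continuous fun t : ℝ => 2 * N ^ 3 / (1 + (N * t) ^ 2) := by
      refine Continuous.div (by fun_prop) (by fun_prop) (fun t => by positivity)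
    calc _ ≤ ∫ t in (-1 : ℝ)..1, 2 * N ^ 3 / (1 + (N * t) ^ 2) := by
          refine intervalIntegral.integral_mono_on (by norm_num) ((by fun_prop : Continuous _).intervalIntegrable _ _) (hc.intervalIntegrable _ _) ?_
          intro t ht
          rw [le_div_iff₀ (by positivity), Polynomial.eval_pow]
          have a1 := h1 t ht
          have a2 := h2 t ht
          set s := S.eval t
          have b1 : (t * s) ^ 2 ≤ 1 := (sq_le_one_iff_abs_le_one _).2 a1
          have b2 : s ^ 2 ≤ N ^ 2 := sq_le_sq' (by linarith [abs_le.1 a2]) (by linarith [abs_le.1 a2])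
          have b3 : s ^ 2 * (1 + (N * t) ^ 2) ≤ 2 * N ^ 2 := by
            nlinarith [sq_nonneg N]
          have b4 : (s ^ 2 * (1 + (N * t) ^ 2)) ^ 2 ≤ (2 * N ^ 2) ^ 2 := 
            pow_le_pow_left₀ (by positivity) b3 2
          have b5 : |t| * (2 * N) ≤ 1 + (N * t) ^ 2 := by
            have := sq_abs t
            nlinarith [sq_nonneg (1 - N * |t|)]
          have b6 : |t| * (2 * N) * (s ^ 4 * (1 + (N * t) ^ 2)) ≤ (1 + (N * t) ^ 2) * (s ^ 4 * (1 + (N * t) ^ 2)) := by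
            gcongr
          have b7 : (|t| * s ^ 4 * (1 + (N * t) ^ 2)) * (2 * N) ≤ (2 * N ^ 3) * (2 * N) := by
            nlinarith
          exact le_of_mul_le_mul_right b7 (by positivity)
      _ = 2 * N ^ 2 * Real.arctan (N * 1) - 2 * N ^ 2 * Real.arctan (N * (-1)) :=
          intervalIntegral.integral_eq_sub_of_hasDerivAt (fun t _ => hd t) (hc.intervalIntegrable _ _)
      _ ≤ _ := by
          have c1 := Real.arctan_lt_pi_div_two (N * 1)
          have c2 := Real.neg_pi_div_two_lt_arctan (N * (-1))
          nlinarith [sq_pos_of_pos hN0]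
  refine ⟨S ^ 4, ?_, fun t => by rw [Polynomial.eval_pow]; positivity, lt_of_lt_of_le (by positivity) hlow, ?_⟩
  · refine Polynomial.natDegree_pow_le.trans ?_
    omega
  · refine hup.trans ?_
    calc 2 * Real.pi * N ^ 2 ≤ 256 * Real.pi / (m + 1) * (N ^ 3 / 16) := by
          rw [div_mul_div_comm, le_div_iff₀ (by positivity)]
          have : Real.pi * N ^ 2 * (m + 1) ≤ Real.pi * N ^ 2 * (8 * N) := by gcongr
          linarith
      _ ≤ _ := by gcongr

lemma kernel_R (R : ℝ) (hR : 0 < R) (m : ℕ) : ∃ q : Polynomial ℝ, q.natDegree ≤ m ∧ (∀ t, 0 ≤ q.eval t) ∧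
    ∫ t in Set.Icc (-R) R, q.eval t = 1 ∧
    ∫ t in Set.Icc (-R) R, |t| * q.eval t ≤ R * (256 * Real.pi) / (m + 1) := by
  obtain ⟨q, d, p, i, j⟩ := kernel_one m
  set I := ∫ t in (-1 : ℝ)..1, q.eval t
  have hle : -R ≤ R := by linarith
  refine ⟨Polynomial.C (1 / (R * I)) * q.comp (Polynomial.C (1 / R) * Polynomial.X), ?_, ?_, ?_, ?_⟩
  · refine (Polynomial.natDegree_C_mul_le _ _).trans ?_
    refine Polynomial.natDegree_comp_le.trans ?_
    have : (Polynomial.C (1 / R) * Polynomial.X).natDegree ≤ 1 := by compute_degree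
    nlinarith
  · intro t
    simp only [Polynomial.eval_mul, Polynomial.eval_C, Polynomial.eval_comp]
    have := p (1 / R * Polynomial.eval t Polynomial.X)
    positivity
  · rw [integral_Icc_eq_integral_Ioc, ← intervalIntegral.integral_of_le hle]
    have := intervalIntegral.integral_comp_div (a := -R) (b := R)
      (fun t => 1 / (R * I) * q.eval t) hR.ne'
    simp only [Polynomial.eval_mul, Polynomial.eval_C, Polynomial.eval_comp, Polynomial.eval_X]
    simp only [one_div_mul_eq_div R]
    rw [this, neg_div, div_self hR.ne', intervalIntegral.integral_const_mul, smul_eq_mul]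
    change R * (1 / (R * I) * I) = 1
    field_simp
  · rw [integral_Icc_eq_integral_Ioc, ← intervalIntegral.integral_of_le hle]
    have := intervalIntegral.integral_comp_div (a := -R) (b := R)
      (fun t => 1 / I * (|t| * q.eval t)) hR.ne'
    have h2 : ∀ t, |t| * (Polynomial.C (1 / (R * I)) *
        q.comp (Polynomial.C (1 / R) * Polynomial.X)).eval t =
        1 / I * (|t / R| * q.eval (t / R)) := by
      intro t
      simp only [Polynomial.eval_mul, Polynomial.eval_C, Polynomial.eval_comp, Polynomial.eval_X]
      rw [one_div_mul_eq_div R, abs_div, abs_of_pos hR]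
      field_simp
    simp only [h2]
    rw [this, neg_div, div_self hR.ne', intervalIntegral.integral_const_mul, smul_eq_mul]
    have h3 := mul_le_mul_of_nonneg_left j (by positivity : 0 ≤ R * (1 / I))
    calc _ = _ := by ring
      _ ≤ _ := h3
      _ = _ := by field_simp

lemma integral_cube_prod {n : ℕ} (R : ℝ) (f : Fin n → ℝ → ℝ) :
    ∫ t in {t : EuclideanSpace ℝ (Fin n) | ∀ i, t i ∈ Set.Icc (-R) R}, ∏ i, f i (t i) =
      ∏ i, ∫ s in Set.Icc (-R) R, f i s := by
  have hm : MeasurableSet {t : EuclideanSpace ℝ (Fin n) | ∀ i, t i ∈ Set.Icc (-R) R} := by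
    rw [Set.ofPred_forall]
    refine MeasurableSet.iInter fun i => ?_
    exact measurableSet_Icc.preimage (by fun_prop : Measurable fun t : EuclideanSpace ℝ (Fin n) => t i)
  rw [← integral_indicator hm]
  have h := (PiLp.volume_preserving_ofLp (Fin n)).integral_comp
    (MeasurableEquiv.toLp 2 (Fin n → ℝ)).symm.measurableEmbedding
    (fun t : Fin n → ℝ => ∏ i, (Set.Icc (-R) R).indicator (f i) (t i))
  rw [integral_fintype_prod_volume_eq_prod] at h
  simp_rw [integral_indicator measurableSet_Icc] at h
  rw [← h]
  congr 1
  ext t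
  by_cases ht : ∀ i, t i ∈ Set.Icc (-R) R
  · rw [Set.indicator_of_mem (by exact ht)]
    exact Finset.prod_congr rfl fun i _ => (Set.indicator_of_mem (ht i) _).symm
  · rw [Set.indicator_of_notMem (by exact ht)]
    push Not at ht
    obtain ⟨i, hi⟩ := ht
    exact (Finset.prod_eq_zero (Finset.mem_univ i) (Set.indicator_of_notMem hi _)).symm

noncomputable def shiftPoly {n : ℕ} (q : Polynomial ℝ) (y : EuclideanSpace ℝ (Fin n)) :
    MvPolynomial (Fin n) ℝ :=
  ∏ i, Polynomial.aeval (MvPolynomial.X i - MvPolynomial.C (y i)) q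

lemma eval_shiftPoly {n : ℕ} (q : Polynomial ℝ) (x y : EuclideanSpace ℝ (Fin n)) :
    MvPolynomial.eval x (shiftPoly q y) = ∏ i, q.eval ((x - y) i) := by
  unfold shiftPoly
  rw [map_prod]
  refine Finset.prod_congr rfl fun i _ => ?_
  rw [Polynomial.aeval_eq_sum_range, map_sum, Polynomial.eval_eq_sum_range]
  simp [MvPolynomial.smul_eval]

lemma totalDegree_shiftPoly {n : ℕ} (q : Polynomial ℝ) (y : EuclideanSpace ℝ (Fin n)) :
    (shiftPoly q y).totalDegree ≤ n * q.natDegree := by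
  refine (MvPolynomial.totalDegree_finsetProd _ _).trans ?_
  refine (Finset.sum_le_card_nsmul _ _ q.natDegree fun i _ => ?_).trans (by simp)
  rw [Polynomial.aeval_eq_sum_range]
  refine MvPolynomial.totalDegree_finsetSum_le fun k hk => ?_
  refine (MvPolynomial.totalDegree_smul_le _ _).trans ?_
  refine (MvPolynomial.totalDegree_pow _ _).trans ?_
  have : (MvPolynomial.X i - MvPolynomial.C (y i) : MvPolynomial (Fin n) ℝ).totalDegree ≤ 1 := by
    refine (MvPolynomial.totalDegree_sub _ _).trans (by simp)
  have := Finset.mem_range.1 hk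
  nlinarith

lemma continuous_coeff_shiftPoly {n : ℕ} (q : Polynomial ℝ) (α : Fin n →₀ ℕ) :
    Continuous fun y : EuclideanSpace ℝ (Fin n) => (shiftPoly q y).coeff α := by
  classical
  have mul : ∀ P Q : EuclideanSpace ℝ (Fin n) → MvPolynomial (Fin n) ℝ,
      (∀ α, Continuous fun y => (P y).coeff α) → (∀ α, Continuous fun y => (Q y).coeff α) →
      ∀ α, Continuous fun y => (P y * Q y).coeff α := by
    intro P Q hP hQ α
    simp only [MvPolynomial.coeff_mul]
    exact continuous_finsetSum _ fun z _ => (hP _).mul (hQ _)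
  have base : ∀ i : Fin n, ∀ α, Continuous fun y : EuclideanSpace ℝ (Fin n) =>
      (MvPolynomial.X i - MvPolynomial.C (y i) : MvPolynomial (Fin n) ℝ).coeff α := by
    intro i α
    simp only [MvPolynomial.coeff_sub, MvPolynomial.coeff_C]
    split_ifs <;> fun_prop
  have pw : ∀ i : Fin n, ∀ k : ℕ, ∀ α, Continuous fun y : EuclideanSpace ℝ (Fin n) =>
      ((MvPolynomial.X i - MvPolynomial.C (y i) : MvPolynomial (Fin n) ℝ) ^ k).coeff α := by
    intro i k
    induction k with
    | zero => intro α; simp only [pow_zero]; exact continuous_const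
    | succ k ih => simp only [pow_succ]; exact mul _ _ ih (base i)
  have one : ∀ i : Fin n, ∀ α, Continuous fun y : EuclideanSpace ℝ (Fin n) =>
      (Polynomial.aeval (MvPolynomial.X i - MvPolynomial.C (y i) : MvPolynomial (Fin n) ℝ) q).coeff α := by
    intro i α
    simp only [Polynomial.aeval_eq_sum_range, MvPolynomial.coeff_sum, MvPolynomial.coeff_smul]
    exact continuous_finsetSum _ fun k _ => continuous_const.mul (pw i k α)
  have : ∀ s : Finset (Fin n), ∀ α, Continuous fun y : EuclideanSpace ℝ (Fin n) =>
      (∏ i ∈ s, Polynomial.aeval (MvPolynomial.X i - MvPolynomial.C (y i) : MvPolynomial (Fin n) ℝ) q).coeff α := by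
    intro s
    induction s using Finset.induction_on with
    | empty => intro α; simp only [Finset.prod_empty]; exact continuous_const
    | insert a s ha ih => simp only [Finset.prod_insert ha]; exact mul _ _ (one a) ih
  exact this Finset.univ α

lemma exists_conv_poly {n : ℕ} (q : Polynomial ℝ) (g : EuclideanSpace ℝ (Fin n) → ℝ)
    (hg : Continuous g) (hc : HasCompactSupport g) :
    ∃ p : MvPolynomial (Fin n) ℝ, p.totalDegree ≤ n * q.natDegree ∧
      ∀ x : EuclideanSpace ℝ (Fin n), MvPolynomial.eval x p = ∫ t : EuclideanSpace ℝ (Fin n), (∏ i, q.eval (t i)) • g (x - t) := by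
  classical
  set d := n * q.natDegree
  have hfin : {α : Fin n →₀ ℕ | α.degree ≤ d}.Finite := Finsupp.finite_of_degree_le d
  set s := hfin.toFinset
  refine ⟨∑ α ∈ s, MvPolynomial.monomial α (∫ y, g y * (shiftPoly q y).coeff α), ?_, ?_⟩
  · refine MvPolynomial.totalDegree_finsetSum_le fun α hα => ?_
    refine (MvPolynomial.totalDegree_monomial_le _ _).trans ?_
    exact hfin.mem_toFinset.1 hα
  · intro x
    rw [← integral_sub_left_eq_self _ volume x]
    simp only [sub_sub_cancel, ← eval_shiftPoly]
    have hs : ∀ y, MvPolynomial.eval x (shiftPoly q y) = ∑ α ∈ s, (shiftPoly q y).coeff α * ∏ i, x i ^ α i := by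
      intro y
      rw [MvPolynomial.eval_eq']
      refine Finset.sum_subset ?_ ?_
      · intro α hα
        refine hfin.mem_toFinset.2 ?_
        refine le_trans ?_ (totalDegree_shiftPoly q y)
        exact MvPolynomial.le_totalDegree hα
      · intro α _ hα
        rw [MvPolynomial.notMem_support_iff.1 hα, zero_mul]
    simp only [hs, map_sum, MvPolynomial.eval_monomial, smul_eq_mul, Finset.sum_mul]
    rw [integral_finsetSum]
    · refine Finset.sum_congr rfl fun α _ => ?_
      rw [Finsupp.prod_fintype _ _ (by simp), ← integral_mul_const]
      congr 1; ext y; ring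
    · intro α _
      refine Continuous.integrable_of_hasCompactSupport ?_ (hc.mul_left)
      exact ((continuous_coeff_shiftPoly q α).mul continuous_const).mul hg

lemma cube_error {n : ℕ} {W : Type*} [NormedAddCommGroup W] [NormedSpace ℝ W] [CompleteSpace W]
    (R M : ℝ) (q : Polynomial ℝ) (hq : ∀ t, 0 ≤ q.eval t)
    (h1 : ∫ t in Set.Icc (-R) R, q.eval t = 1)
    (hM : ∫ t in Set.Icc (-R) R, |t| * q.eval t ≤ M)
    (F : EuclideanSpace ℝ (Fin n) → W) (L : NNReal) (hF : LipschitzWith L F)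
    (x : EuclideanSpace ℝ (Fin n)) (hx : ∀ t, R < ‖t‖ → F (x - t) = 0) :
    ‖F x - ∫ t : EuclideanSpace ℝ (Fin n), (∏ i, q.eval (t i)) • F (x - t)‖ ≤ L * (n * M) := by
  set Q := {t : EuclideanSpace ℝ (Fin n) | ∀ i, t i ∈ Set.Icc (-R) R} with hQ
  set K : EuclideanSpace ℝ (Fin n) → ℝ := fun t => ∏ i, q.eval (t i) with hK
  have hKc : Continuous K := by
    refine continuous_finsetProd _ fun i _ => ?_
    exact q.continuous.comp (by fun_prop)
  have hK0 : ∀ t, 0 ≤ K t := fun t => Finset.prod_nonneg fun i _ => hq _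
  have hQcomp : IsCompact Q := by
    have := (isCompact_univ_pi fun _ : Fin n => isCompact_Icc (a := -R) (b := R)).image
      (PiLp.continuous_toLp 2 (fun _ : Fin n => ℝ))
    convert this using 1
    ext t
    constructor
    · intro ht
      exact ⟨t.ofLp, fun i _ => ht i, rfl⟩
    · rintro ⟨u, hu, rfl⟩ i
      exact hu i (Set.mem_univ i)
  have hint : ∀ f : EuclideanSpace ℝ (Fin n) → W, Continuous f → IntegrableOn f Q :=
    fun f hf => hf.continuousOn.integrableOn_compact hQcomp
  have hintR : ∀ f : EuclideanSpace ℝ (Fin n) → ℝ, Continuous f → IntegrableOn f Q :=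
    fun f hf => hf.continuousOn.integrableOn_compact hQcomp
  have hKint : ∫ t in Q, K t = 1 := by
    have := integral_cube_prod (n := n) R (fun _ s => q.eval s)
    rw [← hQ] at this
    rw [this, h1]; simp
  have hmom : ∀ i, ∫ t in Q, |t i| * K t ≤ M := by
    intro i
    have := integral_cube_prod (n := n) R (fun j s => if j = i then |s| * q.eval s else q.eval s)
    rw [← hQ] at this
    have e : ∀ t : EuclideanSpace ℝ (Fin n), |t i| * K t = ∏ j, (if j = i then |t j| * q.eval (t j) else q.eval (t j)) := by
      intro t
      have : ∀ j, (if j = i then |t j| * q.eval (t j) else q.eval (t j)) = (if j = i then |t j| else 1) * q.eval (t j) := by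
        intro j; split_ifs <;> simp
      simp only [this, Finset.prod_mul_distrib, Finset.prod_ite_eq', Finset.mem_univ, if_true, hK]
    simp only [e]
    rw [this]
    refine le_trans (le_of_eq ?_) hM
    rw [Finset.prod_eq_single i]
    · simp
    · intro j _ hj; simp [hj, h1]
    · simp
  have hset : ∫ t, K t • F (x - t) = ∫ t in Q, K t • F (x - t) := by
    refine (setIntegral_eq_integral_of_forall_compl_eq_zero fun t ht => ?_).symm
    rw [hx t, smul_zero]
    by_contra hcon
    refine ht fun i => abs_le.1 ?_
    exact ((Real.norm_eq_abs _) ▸ PiLp.norm_apply_le t i).trans (not_lt.1 hcon)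
  have hFc := hF.continuous
  have hFx : F x = ∫ t in Q, K t • F x := by
    rw [integral_smul_const, hKint, one_smul]
  rw [hset]
  nth_rewrite 1 [hFx]
  rw [← integral_sub (hint _ (by fun_prop)) (hint _ (by fun_prop))]
  have hb : ∀ t, ‖K t • F x - K t • F (x - t)‖ ≤ ∑ i, L * (|t i| * K t) := by
    intro t
    rw [← smul_sub, norm_smul, Real.norm_of_nonneg (hK0 t), ← Finset.mul_sum, ← Finset.sum_mul]
    have a := hF.norm_sub_le x (x - t)
    rw [sub_sub_cancel] at a
    have b : ‖t‖ ≤ ∑ i, |t i| := by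
      rw [EuclideanSpace.norm_eq]
      refine Real.sqrt_le_iff.2 ⟨Finset.sum_nonneg fun i _ => abs_nonneg _, ?_⟩
      exact Finset.sum_sq_le_sq_sum_of_nonneg fun i _ => abs_nonneg _
    calc _ ≤ K t * (L * ∑ i, |t i|) := by
          gcongr
          · exact hK0 t
          · exact a.trans (by gcongr)
      _ = _ := by ring
  refine (norm_integral_le_of_norm_le (g := fun t => ∑ i, L * (|t i| * K t)) ?_ (Filter.Eventually.of_forall hb)).trans ?_
  · exact hintR _ (by fun_prop)
  · rw [integral_finsetSum _ fun i _ => hintR _ (by fun_prop)]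
    simp only [integral_const_mul]
    refine (Finset.sum_le_card_nsmul _ _ (L * M) fun i _ => ?_).trans (le_of_eq ?_)
    · gcongr; exact hmom i
    · simp; ring


/-- `‖h‖_{C⁰(K)}`: supremum of `|h|` over `K`. -/
noncomputable def supNormC0 {E : Type*} (K : Set E) (h : E → ℝ) : ℝ :=
  sSup ((fun z => |h z|) '' K)

/-- `‖h‖_{C¹(K)} := max_{x∈K}|h(x)| + max_{x∈K}‖∇h(x)‖₂`. -/
noncomputable def supNormC1 {n : ℕ} (K : Set (EuclideanSpace ℝ (Fin n)))
    (h : EuclideanSpace ℝ (Fin n) → ℝ) : ℝ :=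
  supNormC0 K h + sSup ((fun z => ‖gradient h z‖) '' K)

/-- Bagby–Bos–Levenberg: Let `X ⊂ ℝⁿ` be compact and `h : ℝⁿ → ℝ` be such that
`h` and `∇h` are continuously differentiable (i.e. `h` is of class `C²`). Then there is a
constant `c₁ ≥ 0` depending only on `h` and `X` such that for every integer `d ≥ 1` there is a
polynomial `p_d` in `n` variables with `deg p_d ≤ d` and `‖h − p_d‖_{C¹(X)} ≤ c₁/d`. -/
theorem bagby_approximation (n : ℕ) (X : Set (EuclideanSpace ℝ (Fin n))) (hX : IsCompact X)
    (h : EuclideanSpace ℝ (Fin n) → ℝ) (hh : ContDiff ℝ 2 h) :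
    ∃ c₁ : ℝ, 0 ≤ c₁ ∧ ∀ d : ℕ, 1 ≤ d → ∃ p : MvPolynomial (Fin n) ℝ,
      p.totalDegree ≤ d ∧
      supNormC1 X (fun x : EuclideanSpace ℝ (Fin n) => h x - MvPolynomial.eval x p) ≤ c₁ / d := by
  obtain ⟨ρ, hρ0, hρ⟩ : ∃ ρ > 0, X ⊆ Metric.ball 0 ρ := by
    obtain ⟨r, hr⟩ := hX.isBounded.subset_ball 0
    exact ⟨max r 1, by positivity, hr.trans (Metric.ball_subset_ball (le_max_left _ _))⟩
  let φ : ContDiffBump (0 : EuclideanSpace ℝ (Fin n)) := ⟨ρ, ρ + 1, hρ0, by linarith⟩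
  set g : EuclideanSpace ℝ (Fin n) → ℝ := fun x => φ x * h x with hg
  have hgC : ContDiff ℝ 2 g := φ.contDiff.mul hh
  have hgs : HasCompactSupport g := φ.hasCompactSupport.mul_right
  have hg1 : ContDiff ℝ 1 g := hgC.of_le (by norm_num)
  have hdC : ContDiff ℝ 1 (fderiv ℝ g) := hgC.fderiv_right (by norm_num)
  have hds : HasCompactSupport (fderiv ℝ g) := hgs.fderiv ℝ
  obtain ⟨L₁, hL₁⟩ := ContDiff.lipschitzWith_of_hasCompactSupport hgs hg1 (by norm_num)
  obtain ⟨L₂, hL₂⟩ := ContDiff.lipschitzWith_of_hasCompactSupport hds hdC (by norm_num)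
  have hts : tsupport g ⊆ Metric.closedBall 0 (ρ + 1) := by
    refine (closure_mono (Function.support_mul_subset_left _ _)).trans ?_
    exact φ.tsupport_eq.subset
  have hzero : ∀ y : EuclideanSpace ℝ (Fin n), ρ + 1 < ‖y‖ → g y = 0 ∧ fderiv ℝ g y = 0 := by
    intro y hy
    have hy' : y ∉ tsupport g := fun hc => by
      have := hts hc
      rw [mem_closedBall_zero_iff] at this
      linarith
    refine ⟨image_eq_zero_of_notMem_tsupport hy', ?_⟩
    exact image_eq_zero_of_notMem_tsupport fun hc => hy' (tsupport_fderiv_subset ℝ hc)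
  set R := ρ + (ρ + 1) with hR
  set A := R * (256 * Real.pi) with hA
  have hRpos : 0 < R := by positivity
  have hApos : 0 < A := by positivity
  refine ⟨(L₁ + L₂) * (n * (A * n)), by positivity, fun d hd => ?_⟩
  obtain ⟨q, qd, q0, q1, qm⟩ := kernel_R R hRpos (d / n)
  obtain ⟨p, pd, pe⟩ := exists_conv_poly q g hgC.continuous hgs
  refine ⟨p, pd.trans ((Nat.mul_le_mul_left n qd).trans (Nat.mul_div_le d n)), ?_⟩
  set M := A / ((d / n : ℕ) + 1) with hM
  have hnM : n * M ≤ n * (A * n) / d := by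
    rcases Nat.eq_zero_or_pos n with h0 | h0
    · simp [h0]
    have : d ≤ n * (d / n + 1) := (Nat.lt_mul_div_succ d h0).le
    have this' : (d : ℝ) ≤ n * ((d / n : ℕ) + 1) := by exact_mod_cast this
    have hd' : (0 : ℝ) < d := by exact_mod_cast hd
    rw [hM, ← mul_div_assoc, div_le_div_iff₀ (by positivity) hd']
    calc n * A * d ≤ n * A * (n * ((d / n : ℕ) + 1)) := by gcongr
      _ = _ := by ring
  have hfar : ∀ x ∈ X, ∀ t : EuclideanSpace ℝ (Fin n), R < ‖t‖ → ρ + 1 < ‖x - t‖ := by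
    intro x hx t ht
    have h1 := mem_ball_zero_iff.1 (hρ hx)
    have h2 := norm_sub_norm_le t x
    rw [norm_sub_rev] at h2
    linarith
  have hnear : ∀ x ∈ X, h =ᶠ[nhds x] g := by
    intro x hx
    filter_upwards [φ.eventuallyEq_one_of_mem_ball (hρ hx)] with y hy
    simp [hg, hy]
  have hKc : Continuous fun t : EuclideanSpace ℝ (Fin n) => ∏ i, q.eval (t i) :=
    continuous_finsetProd _ fun i _ => q.continuous.comp (by fun_prop)
  have hder : ∀ x : EuclideanSpace ℝ (Fin n),
      HasFDerivAt (fun x : EuclideanSpace ℝ (Fin n) => MvPolynomial.eval x p)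
        (∫ t : EuclideanSpace ℝ (Fin n), (∏ i, q.eval (t i)) • fderiv ℝ g (x - t)) x := by
    intro x
    have := hgs.hasFDerivAt_convolution_right (ContinuousLinearMap.lsmul ℝ ℝ)
      (hKc.locallyIntegrable (μ := volume)) hg1 x
    have e1 : (fun x : EuclideanSpace ℝ (Fin n) => MvPolynomial.eval x p) =
        convolution (fun t : EuclideanSpace ℝ (Fin n) => ∏ i, q.eval (t i)) g
          (ContinuousLinearMap.lsmul ℝ ℝ) volume := by
      ext x; rw [pe]; rfl
    rw [e1]
    refine this.congr_fderiv ?_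
    unfold convolution
    congr 1
  have hE0 : ∀ x ∈ X, |h x - MvPolynomial.eval x p| ≤ L₁ * (n * M) := by
    intro x hx
    have := cube_error R M q q0 q1 qm g L₁ hL₁ x fun t ht => (hzero _ (hfar x hx t ht)).1
    rw [pe, (hnear x hx).eq_of_nhds]
    exact this
  have hE1 : ∀ x ∈ X, ‖gradient (fun x : EuclideanSpace ℝ (Fin n) =>
      h x - MvPolynomial.eval x p) x‖ ≤ L₂ * (n * M) := by
    intro x hx
    have := cube_error R M q q0 q1 qm (fderiv ℝ g) L₂ hL₂ x
      fun t ht => (hzero _ (hfar x hx t ht)).2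
    have hgd : HasFDerivAt h (fderiv ℝ g x) x :=
      ((hg1.differentiable (by norm_num)) x).hasFDerivAt.congr_of_eventuallyEq (hnear x hx)
    rw [gradient, LinearIsometryEquiv.norm_map, (hgd.fun_sub (hder x)).fderiv]
    exact this
  have hM0 : 0 ≤ n * M := by positivity
  calc supNormC1 X (fun x : EuclideanSpace ℝ (Fin n) => h x - MvPolynomial.eval x p)
      ≤ L₁ * (n * M) + L₂ * (n * M) := by
        refine add_le_add (Real.sSup_le ?_ (by positivity)) (Real.sSup_le ?_ (by positivity))
        · rintro _ ⟨x, hx, rfl⟩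
          exact hE0 x hx
        · rintro _ ⟨x, hx, rfl⟩
          exact hE1 x hx
    _ = (L₁ + L₂) * (n * M) := by ring
    _ ≤ (L₁ + L₂) * (n * (A * n) / d) := by gcongr
    _ = _ := by ring
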